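/- Every oriented 2-edge-connected graph with n vertices and m edges has at least 2^{(m-n)/3} nowhere-zero (Z/2 × Z/3)-flows. -/

import Mathlib

open scoped Classical

/-- A multigraph with an orientation: each edge `e` has a source `src e` and a target `tgt e`.
Loops and parallel edges are allowed. -/
structure Multigraph (V E : Type) where
  src : E → V
  tgt : E → V

namespace Multigraph

variable {V E : Type}

/-- `u` and `v` are joined by some edge satisfying the predicate `P`. -/
def adjVia (G : Multigraph V E) (P : E → Prop) (u v : V) : Prop :=
  ∃ e, P e ∧ ((G.src e = u ∧ G.tgt e = v) ∨ (G.src e = v ∧ G.tgt e = u))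

/-- `v` is reachable from `u` using only edges satisfying `P`. -/
def Reaches (G : Multigraph V E) (P : E → Prop) : V → V → Prop :=
  Relation.ReflTransGen (G.adjVia P)

/-- The graph is connected when only edges satisfying `P` are kept (all edges deleted
whose predicate fails, all vertices kept). -/
def ConnectedVia (G : Multigraph V E) (P : E → Prop) : Prop :=
  Nonempty V ∧ ∀ u v : V, G.Reaches P u v

def Connected (G : Multigraph V E) : Prop :=
  G.ConnectedVia fun _ => True

/-- `G` is `k`-edge-connected: it is connected and has no edge cut of size less than `k`;
equivalently, deleting any set of fewer than `k` edges leaves it connected. -/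
def EdgeConnected (G : Multigraph V E) (k : ℕ) : Prop :=
  ∀ S : Set E, S.ncard < k → G.ConnectedVia fun e => e ∉ S

/-- The degree of a vertex (loops counted twice). -/
noncomputable def degree (G : Multigraph V E) (v : V) : ℕ :=
  {e | G.src e = v}.ncard + {e | G.tgt e = v}.ncard

/-- Every vertex has degree exactly 3. -/
def Cubic (G : Multigraph V E) : Prop :=
  ∀ v : V, G.degree v = 3

/-- `φ : E → Γ` is a flow: at every vertex, the sum over outgoing edges equals the
sum over incoming edges. -/
def IsFlow [Fintype E] {Γ : Type} [AddCommGroup Γ] (G : Multigraph V E) (φ : E → Γ) : Prop :=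
  ∀ v : V, (∑ e : E, if G.src e = v then φ e else 0) = ∑ e : E, if G.tgt e = v then φ e else 0

/-- The vertex `v` is an endpoint of some edge of `C`. -/
def touches (G : Multigraph V E) (C : Set E) (v : V) : Prop :=
  ∃ e ∈ C, G.src e = v ∨ G.tgt e = v

/-- An edge set `C` is (the edge set of) a cycle: it is nonempty, every vertex it touches
has degree exactly 2 in it, and it is connected. -/
def IsCycle (G : Multigraph V E) (C : Set E) : Prop :=
  C.Nonempty ∧
  (∀ v : V, G.touches C v →
    ({e ∈ C | G.src e = v}.ncard + {e ∈ C | G.tgt e = v}.ncard = 2)) ∧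
  (∀ u v : V, G.touches C u → G.touches C v → G.Reaches (· ∈ C) u v)

/-- `R` is `k`-closed: every cycle with at least one edge outside `R` has at least
`k+1` edges outside `R`. -/
def Closed (G : Multigraph V E) (k : ℕ) (R : Set E) : Prop :=
  ∀ C : Set E, G.IsCycle C → (C \ R).Nonempty → k + 1 ≤ (C \ R).ncard

/-- The `k`-closure `⟨S⟩ₖ` of `S` : the minimal `k`-closed set containing `S`
(the family of `k`-closed sets is closed under intersections). -/
def kClosure (G : Multigraph V E) (k : ℕ) (S : Set E) : Set E :=
  ⋂₀ {R : Set E | S ⊆ R ∧ G.Closed k R}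

/-- `S` is a `k`-base: its `k`-closure is the whole edge set. -/
def IsBase (G : Multigraph V E) (k : ℕ) (S : Set E) : Prop :=
  G.kClosure k S = Set.univ

/-- An edge set `S` is peripheral if `G − S` is connected. -/
def Peripheral (G : Multigraph V E) (S : Set E) : Prop :=
  G.ConnectedVia fun e => e ∉ S

/-- The spanning subgraph `(V, F)` is a forest, i.e. contains no cycle. -/
def IsForest (G : Multigraph V E) (F : Set E) : Prop :=
  ∀ C : Set E, G.IsCycle C → ¬ C ⊆ F

/-- `vs`, `es` describe a path: distinct vertices `vs 0, …, vs n` and distinct edges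
`es 0, …, es (n-1)` where `es i` joins `vs i` and `vs (i+1)`. -/
def IsPath (G : Multigraph V E) {n : ℕ} (vs : Fin (n + 1) → V) (es : Fin n → E) : Prop :=
  Function.Injective vs ∧ Function.Injective es ∧
  ∀ i : Fin n,
    (G.src (es i) = vs i.castSucc ∧ G.tgt (es i) = vs i.succ) ∨
    (G.src (es i) = vs i.succ ∧ G.tgt (es i) = vs i.castSucc)

/-- The edge `e` has `y` as one endpoint and its other endpoint in `X`,
i.e. `e ∈ E(y, X)`. -/
def joins (G : Multigraph V E) (e : E) (y : V) (X : Set V) : Prop :=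
  (G.src e = y ∧ G.tgt e ∈ X) ∨ (G.tgt e = y ∧ G.src e ∈ X)

/-- `W` is the vertex set of a connected component of `G − X`. -/
def IsComponent (G : Multigraph V E) (X W : Set V) : Prop :=
  W.Nonempty ∧ Disjoint W X ∧
  (∀ u ∈ W, ∀ v : V, v ∉ X → G.adjVia (fun _ => True) u v → v ∈ W) ∧
  (∀ u ∈ W, ∀ v ∈ W, G.Reaches (fun e => G.src e ∉ X ∧ G.tgt e ∉ X) u v)

/-- The subgraph induced on `W`, with only those of its edges satisfying `P` kept,
is connected. -/
def ConnectedOn (G : Multigraph V E) (W : Set V) (P : E → Prop) : Prop :=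
  ∀ u ∈ W, ∀ v ∈ W, G.Reaches (fun e => P e ∧ G.src e ∈ W ∧ G.tgt e ∈ W) u v

/-- The subgraph induced on `W` is `k`-edge-connected. -/
def EdgeConnectedOn (G : Multigraph V E) (W : Set V) (k : ℕ) : Prop :=
  ∀ S : Set E, S.ncard < k → G.ConnectedOn W fun e => e ∉ S

/-- Some cycle lies entirely inside the vertex set `X`. -/
def HasCycleIn (G : Multigraph V E) (X : Set V) : Prop :=
  ∃ C : Set E, G.IsCycle C ∧ ∀ e ∈ C, G.src e ∈ X ∧ G.tgt e ∈ X

/-- The edge cut `E(X, V \ X)`. -/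
def cutEdges (G : Multigraph V E) (X : Set V) : Set E :=
  {e | (G.src e ∈ X ∧ G.tgt e ∉ X) ∨ (G.src e ∉ X ∧ G.tgt e ∈ X)}

/-- A cubic graph is cyclically `k`-edge-connected if every edge cut separating two
cycle-containing parts has at least `k` edges. -/
def CyclicallyEdgeConnected (G : Multigraph V E) (k : ℕ) : Prop :=
  ∀ X : Set V, G.HasCycleIn X → G.HasCycleIn Xᶜ → k ≤ (G.cutEdges X).ncard

/-- `G` is 3-connected: more than 3 vertices, connected, and still connected after
deleting any two vertices. -/
def ThreeConnected [Fintype V] (G : Multigraph V E) : Prop :=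
  3 < Fintype.card V ∧ G.Connected ∧
    ∀ u v : V, G.ConnectedOn {w : V | w ≠ u ∧ w ≠ v} fun _ => True

/-- The graph `G − r` obtained by deleting the vertex `r` and all incident edges. -/
def deleteVertex (G : Multigraph V E) (r : V) :
    Multigraph {v : V // v ≠ r} {e : E // G.src e ≠ r ∧ G.tgt e ≠ r} where
  src e := ⟨G.src e.1, e.2.1⟩
  tgt e := ⟨G.tgt e.1, e.2.2⟩

end Multigraph

/-!
Suppose first that `G` is 3-edge-connected, and let `A`, `B` be finite abelian groups with
`|A| ≥ 2` and `|B| ≥ 3`. Grow a vertex set `X` from a single vertex. A leaf block of `G - X` is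
joined to `X` by at least two edges, so by Menger's theorem it contains a closed trail `W` joined
to `X` by at least two edges; nonzero values on the edges between `W` and `X` can be chosen to give
`W` any prescribed outflow, and values on the trail then correct the boundary inside `W`. When `X`
exhausts the graph, the trails add up to an integer flow `f` with values in `{-1, 0, 1}`, and some
`B`-flow `ψ` is nonzero off the support of `f`. Averaging over `c ∈ B`, some `χ = ψ + f • c`
vanishes on a set `Z` of at most `|supp f| / |B|` edges, all in the support of `f`, and
`|supp f| ≤ 2 (m - n + 1)` because every vertex has degree at least three in `G` and even degree in
the support. At least `|A| ^ (m - n + 1 - |Z|)` of the `A`-flows vanish on `Z`; adding `f • a` with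
`a ≠ 0` to them and pairing with `χ` gives nowhere-zero `A × B`-flows.

A flow is nonzero on both or on neither of the edges of a 2-edge cut. So contracting one of them,
which leaves `m - n` unchanged, creates no new nowhere-zero flows, and this reduces the
2-edge-connected case to the 3-edge-connected one.
-/

namespace Multigraph

open Function (support)

section Cardinality

variable {α β : Type}

theorem natCast_ncard_eq_sum {R : Type} [AddCommMonoidWithOne R] [Fintype α] (S : Set α) :
    (S.ncard : R) = ∑ a, if a ∈ S then 1 else 0 := by
  rw [Finset.sum_boole, Set.ncard_eq_toFinset_card', Set.toFinset_card, Fintype.card_subtype]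

theorem sum_ncard_fiber [Finite α] [Fintype β] (S : Set α) (g : α → β) :
    ∑ b, {a ∈ S | g a = b}.ncard = S.ncard := by
  cases nonempty_fintype α
  rw [Set.ncard_eq_toFinset_card' S,
    Finset.card_eq_sum_card_fiberwise fun a _ => Finset.mem_univ (g a)]
  refine Finset.sum_congr rfl fun b _ => ?_
  rw [Set.ncard_eq_toFinset_card']
  congr 1
  ext a
  simp

theorem exists_card_mul_ncard_fiber_le [Finite α] [Finite β] [Nonempty β]
    (S : Set α) (g : α → β) : ∃ b, Nat.card β * {a ∈ S | g a = b}.ncard ≤ S.ncard := by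
  cases nonempty_fintype β
  obtain ⟨b, -, hb⟩ := Finset.exists_le_of_sum_le
    (f := fun b => Nat.card β * {a ∈ S | g a = b}.ncard) (g := fun _ => S.ncard)
    Finset.univ_nonempty (by simp [← Finset.mul_sum, sum_ncard_fiber])
  exact ⟨b, hb⟩

theorem card_subtype_ne_add_one [Fintype α] (a : α) :
    Nat.card {b // b ≠ a} + 1 = Fintype.card α := by
  have h := Set.ncard_add_ncard_compl {a}
  rwa [Set.ncard_singleton, add_comm, Nat.card_eq_fintype_card] at h

theorem card_le_card_ker_mul_card {M N : Type} [AddGroup M] [AddGroup N] [Finite N] (T : M →+ N) :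
    Nat.card M ≤ Nat.card T.ker * Nat.card N := by
  rw [← T.ker.card_mul_index, AddSubgroup.index_ker]
  exact Nat.mul_le_mul_left _ (Nat.card_le_card_of_injective _ Subtype.val_injective)

end Cardinality

section Boundary

variable {V E Γ : Type} [AddCommGroup Γ]

theorem eq_zero_of_sum_eq_zero [Fintype V] {β : V → Γ} (hsum : ∑ v, β v = 0) {r : V}
    (hβ : ∀ v, v ≠ r → β v = 0) : β = 0 := by
  ext v
  rcases eq_or_ne v r with rfl | hv
  · rwa [Finset.sum_eq_single v (fun u _ => hβ u) (by simp)] at hsum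
  · exact hβ v hv

variable [Fintype E] (G : Multigraph V E)

/-- The net amount of `φ` leaving the vertex set `S`. -/
noncomputable def outflow (S : Set V) : (E → Γ) →+ Γ where
  toFun φ :=
    ∑ e, (S.indicator (fun _ => φ e) (G.src e) - S.indicator (fun _ => φ e) (G.tgt e))
  map_zero' := by simp
  map_add' φ ψ := by
    rw [← Finset.sum_add_distrib]
    refine Finset.sum_congr rfl fun e _ => ?_
    simp only [Set.indicator_apply, Pi.add_apply]
    split_ifs <;> abel

/-- The boundary of `φ`: the net amount of `φ` leaving each vertex, which is zero exactly when
`φ` is a flow. -/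
noncomputable def boundary : (E → Γ) →+ (V → Γ) :=
  AddMonoidHom.pi fun v => G.outflow {v}

theorem outflow_apply (S : Set V) (φ : E → Γ) :
    G.outflow S φ =
      ∑ e, (S.indicator (fun _ => φ e) (G.src e) - S.indicator (fun _ => φ e) (G.tgt e)) :=
  rfl

theorem boundary_apply (φ : E → Γ) (v : V) : G.boundary φ v = G.outflow {v} φ :=
  rfl

theorem isFlow_iff_boundary_eq_zero (φ : E → Γ) : G.IsFlow φ ↔ G.boundary φ = 0 := by
  simp only [IsFlow, funext_iff, boundary_apply, outflow_apply, Finset.sum_sub_distrib,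
    Pi.zero_apply, sub_eq_zero, Set.indicator_apply, Set.mem_singleton_iff]

theorem IsFlow.add {G : Multigraph V E} {φ ψ : E → Γ} (hφ : G.IsFlow φ) (hψ : G.IsFlow ψ) :
    G.IsFlow (φ + ψ) := by
  rw [isFlow_iff_boundary_eq_zero] at *
  rw [map_add, hφ, hψ, add_zero]

theorem IsFlow.prodMk {G : Multigraph V E} {Δ : Type} [AddCommGroup Δ] {φ : E → Γ} {ψ : E → Δ}
    (hφ : G.IsFlow φ) (hψ : G.IsFlow ψ) : G.IsFlow fun e => (φ e, ψ e) := by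
  intro v
  ext
  · simpa only [Prod.fst_sum, apply_ite Prod.fst, Prod.fst_zero] using hφ v
  · simpa only [Prod.snd_sum, apply_ite Prod.snd, Prod.snd_zero] using hψ v

theorem IsFlow.zsmul_const {G : Multigraph V E} {f : E → ℤ} (hf : G.IsFlow f) (c : Γ) :
    G.IsFlow fun e => f e • c := by
  intro v
  simpa only [Finset.sum_smul, ite_smul, zero_smul] using congrArg (· • c) (hf v)

theorem outflow_single (S : Set V) (e : E) (c : Γ) :
    G.outflow S (Pi.single e c) =
      S.indicator (fun _ => c) (G.src e) - S.indicator (fun _ => c) (G.tgt e) := by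
  rw [outflow_apply, Finset.sum_eq_single e]
  · rw [Pi.single_eq_same]
  · intro d _ hd
    simp [Pi.single_eq_of_ne hd]
  · simp

theorem boundary_single (e : E) (c : Γ) :
    G.boundary (Pi.single e c) = Pi.single (G.src e) c - Pi.single (G.tgt e) c := by
  ext v
  rw [boundary_apply, outflow_single]
  simp [Set.indicator_apply, Pi.single_apply, eq_comm]

theorem outflow_eq_sum_boundary [Fintype V] (S : Set V) (φ : E → Γ) :
    G.outflow S φ = ∑ v, S.indicator (G.boundary φ) v := by
  simp only [Set.indicator_apply, boundary_apply, outflow_apply, Set.mem_singleton_iff]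
  rw [← Finset.sum_filter, Finset.sum_comm]
  refine Finset.sum_congr rfl fun e _ => ?_
  simp [Finset.sum_sub_distrib]

theorem IsFlow.outflow_eq_zero [Finite V] {G : Multigraph V E} {φ : E → Γ} (hφ : G.IsFlow φ)
    (S : Set V) : G.outflow S φ = 0 := by
  cases nonempty_fintype V
  simp [outflow_eq_sum_boundary, (G.isFlow_iff_boundary_eq_zero φ).1 hφ]

theorem outflow_eq_zero_of_disjoint {S : Set V} {φ : E → Γ}
    (h : Disjoint (support φ) (G.cutEdges S)) : G.outflow S φ = 0 := by
  refine Finset.sum_eq_zero fun e _ => ?_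
  by_cases he : φ e = 0
  · simp [he]
  · have hcut : e ∉ G.cutEdges S := Set.disjoint_left.1 h he
    have hiff : G.src e ∈ S ↔ G.tgt e ∈ S := by
      simp only [cutEdges, Set.mem_ofPred_eq] at hcut
      tauto
    simp [Set.indicator_apply, hiff]

theorem sum_boundary [Fintype V] (φ : E → Γ) : ∑ v, G.boundary φ v = 0 := by
  have h := G.outflow_eq_sum_boundary Set.univ φ
  rw [outflow_eq_zero_of_disjoint G (by simp [cutEdges])] at h
  simpa using h.symm

theorem outflow_eq_of_boundary_eq [Finite V] {S : Set V} {x y : V} (hx : x ∈ S) (hy : y ∉ S)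
    {φ : E → Γ} {c : Γ} (hφ : G.boundary φ = Pi.single x c - Pi.single y c) :
    G.outflow S φ = c := by
  cases nonempty_fintype V
  simp [outflow_eq_sum_boundary, hφ, Set.indicator_apply, Finset.sum_sub_distrib,
    ← Finset.sum_filter, Finset.sum_pi_single', hx, hy]

theorem outflow_ne_zero_of_mem_cutEdges {S : Set V} {φ : E → Γ} {e : E} (he : φ e ≠ 0)
    (heS : e ∈ G.cutEdges S) (h : ∀ d ∈ G.cutEdges S, d ≠ e → φ d = 0) :
    G.outflow S φ ≠ 0 := by
  have hrest : G.outflow S (φ - Pi.single e (φ e)) = 0 := by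
    refine G.outflow_eq_zero_of_disjoint (Set.disjoint_left.2 fun d hd hdS => hd ?_)
    rcases eq_or_ne d e with rfl | hde
    · simp
    · simp [hde, h d hdS hde]
  rw [map_sub, sub_eq_zero] at hrest
  rw [hrest, outflow_single]
  rcases heS with ⟨hs, ht⟩ | ⟨hs, ht⟩ <;> simpa [hs, ht]

end Boundary

section EdgesIn

variable {V E : Type} (G : Multigraph V E)

/-- The edges of the subgraph induced on `S`. -/
def edgesIn (S : Set V) : Set E :=
  {e | G.src e ∈ S ∧ G.tgt e ∈ S}

variable {G}

theorem edgesIn_mono {S T : Set V} (h : S ⊆ T) : G.edgesIn S ⊆ G.edgesIn T :=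
  fun _ he => ⟨h he.1, h he.2⟩

theorem disjoint_edgesIn_cutEdges (S : Set V) : Disjoint (G.edgesIn S) (G.cutEdges S) := by
  rw [Set.disjoint_left]
  rintro e ⟨hs, ht⟩ (h | h)
  · exact h.2 ht
  · exact h.1 hs

theorem disjoint_edgesIn_cutEdges_of_disjoint {S T : Set V} (h : Disjoint S T) :
    Disjoint (G.edgesIn S) (G.cutEdges T) := by
  rw [Set.disjoint_left] at *
  rintro e ⟨hs, ht⟩ (h' | h')
  · exact h hs h'.1
  · exact h ht h'.2

variable {Γ : Type} [AddCommGroup Γ] [Fintype E]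

theorem boundary_eq_zero_of_support_subset_edgesIn {S : Set V} {φ : E → Γ}
    (hφ : support φ ⊆ G.edgesIn S) {v : V} (hv : v ∉ S) : G.boundary φ v = 0 :=
  G.outflow_eq_zero_of_disjoint ((disjoint_edgesIn_cutEdges_of_disjoint
    (Set.disjoint_singleton_right.2 hv)).mono_left hφ)

theorem boundary_indicator_edgesIn_eq_zero {S : Set V} {φ : E → Γ} (hφ : G.boundary φ = 0)
    (hS : Disjoint (support φ) (G.cutEdges S)) :
    G.boundary ((G.edgesIn S).indicator φ) = 0 := by
  ext v
  by_cases hv : v ∈ S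
  · have hout : support (φ - (G.edgesIn S).indicator φ) ⊆ G.edgesIn Sᶜ := by
      intro e he
      by_cases heS : e ∈ G.edgesIn S
      · simp [heS] at he
      · have hcut : e ∉ G.cutEdges S := Set.disjoint_left.1 hS (by simpa [heS] using he)
        simp only [edgesIn, cutEdges, Set.mem_ofPred_eq, Set.mem_compl_iff] at heS hcut ⊢
        tauto
    have h := boundary_eq_zero_of_support_subset_edgesIn hout (v := v) (not_not_intro hv)
    rw [map_sub, hφ] at h
    simpa using h
  · exact boundary_eq_zero_of_support_subset_edgesIn
      (Set.support_indicator.trans_subset Set.inter_subset_left) hv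

end EdgesIn

section Reaches

variable {V E : Type} {G : Multigraph V E} {P : E → Prop}

theorem Reaches.symm {u v : V} (h : G.Reaches P u v) : G.Reaches P v u := by
  have : Std.Symm (G.adjVia P) := ⟨fun _ _ ⟨e, he, h⟩ => ⟨e, he, h.symm⟩⟩
  exact Std.Symm.symm (r := Relation.ReflTransGen (G.adjVia P)) _ _ h

theorem Reaches.mono {Q : E → Prop} (hPQ : ∀ e, P e → Q e) {u v : V} (h : G.Reaches P u v) :
    G.Reaches Q u v :=
  Relation.ReflTransGen.mono (fun _ _ ⟨e, he, hab⟩ => ⟨e, hPQ e he, hab⟩) _ _ h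

theorem mem_of_reaches {S : Set V} (hS : ∀ e, P e → e ∉ G.cutEdges S) {u v : V} (hu : u ∈ S)
    (h : G.Reaches P u v) : v ∈ S := by
  induction h with
  | refl => exact hu
  | tail _ hbc hb =>
    obtain ⟨e, he, hbc⟩ := hbc
    have hcut := hS e he
    simp only [cutEdges, Set.mem_ofPred_eq] at hcut
    rcases hbc with ⟨rfl, rfl⟩ | ⟨rfl, rfl⟩ <;> tauto

theorem notMem_cutEdges_setOf_reaches (x : V) {e : E} (he : P e) :
    e ∉ G.cutEdges {v | G.Reaches P x v} := by
  rintro (⟨hs, ht⟩ | ⟨hs, ht⟩)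
  · exact ht (hs.tail ⟨e, he, Or.inl ⟨rfl, rfl⟩⟩)
  · exact hs (ht.tail ⟨e, he, Or.inr ⟨rfl, rfl⟩⟩)

theorem connectedOn_setOf_reaches (G : Multigraph V E) (P : E → Prop) (x : V) :
    G.ConnectedOn {v | G.Reaches P x v} P := by
  have hx (v : V) (hv : G.Reaches P x v) :
      G.Reaches (fun e => P e ∧ G.Reaches P x (G.src e) ∧ G.Reaches P x (G.tgt e)) x v := by
    induction hv with
    | refl => exact .refl
    | tail hb hbc ih =>
      have hc := hb.tail hbc
      obtain ⟨e, he, h⟩ := hbc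
      refine ih.tail ⟨e, ⟨he, ?_⟩, h⟩
      rcases h with ⟨rfl, rfl⟩ | ⟨rfl, rfl⟩
      · exact ⟨hb, hc⟩
      · exact ⟨hc, hb⟩
  exact fun u hu v hv => (hx u hu).symm.trans (hx v hv)

theorem EdgeConnected.le_ncard_cutEdges {k : ℕ} (hG : G.EdgeConnected k) {S : Set V}
    (hS : S.Nonempty) (hS' : S ≠ Set.univ) : k ≤ (G.cutEdges S).ncard := by
  by_contra! hlt
  obtain ⟨x, hx⟩ := hS
  refine hS' (Set.eq_univ_of_forall fun y => ?_)
  exact mem_of_reaches (fun e he => he) hx ((hG _ hlt).2 x y)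

theorem exists_ncard_cutEdges_lt_of_not_edgeConnected [Finite E] [Nonempty V] {k : ℕ}
    (hG : ¬ G.EdgeConnected k) :
    ∃ S : Set V, S.Nonempty ∧ S ≠ Set.univ ∧ (G.cutEdges S).ncard < k := by
  simp only [EdgeConnected, ConnectedVia, not_forall, not_and] at hG
  obtain ⟨D, hD, hG⟩ := hG
  obtain ⟨x, y, hxy⟩ := hG inferInstance
  refine ⟨{v | G.Reaches (· ∉ D) x v}, ⟨x, .refl⟩, fun h => hxy ?_, hD.trans_le' ?_⟩
  · exact Set.eq_univ_iff_forall.1 h y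
  · exact Set.ncard_le_ncard fun e he => not_not.1 fun heD =>
      notMem_cutEdges_setOf_reaches (P := (· ∉ D)) x heD he

variable [Fintype E] {Γ : Type} [AddCommGroup Γ]

theorem reaches_of_boundary_eq [Finite V] {p : E → Γ} {c : Γ} (hc : c ≠ 0) {x y : V}
    (hp : G.boundary p = Pi.single x c - Pi.single y c) : G.Reaches (· ∈ support p) x y := by
  by_contra hy
  refine hc ?_
  rw [← G.outflow_eq_of_boundary_eq (S := {v | G.Reaches (· ∈ support p) x v}) .refl hy hp]
  exact G.outflow_eq_zero_of_disjoint
    (Set.disjoint_left.2 fun e he => notMem_cutEdges_setOf_reaches x he)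

theorem Reaches.exists_boundary_eq {u v : V} (h : G.Reaches P u v) (c : Γ) :
    ∃ q : E → Γ, (∀ e ∈ support q, P e) ∧ G.boundary q = Pi.single u c - Pi.single v c := by
  induction h with
  | refl => exact ⟨0, by simp, by simp⟩
  | @tail b d _ hbd ih =>
    obtain ⟨q, hqP, hq⟩ := ih
    obtain ⟨e, he, hbd⟩ := hbd
    obtain ⟨a, ha⟩ : ∃ a : Γ,
        G.boundary (Pi.single e a) = (Pi.single b c - Pi.single d c : V → Γ) := by
      rcases hbd with ⟨rfl, rfl⟩ | ⟨rfl, rfl⟩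
      · exact ⟨c, G.boundary_single e c⟩
      · exact ⟨-c, by rw [boundary_single, Pi.single_neg, Pi.single_neg]; abel⟩
    refine ⟨q + Pi.single e a, fun d hd => ?_, by rw [map_add, hq, ha]; abel⟩
    rcases eq_or_ne d e with rfl | hde
    · exact he
    · exact hqP d (by simpa [hde] using hd)

theorem ConnectedOn.exists_boundary_eq [Fintype V] {W : Set V} (hW : G.ConnectedOn W P) {β : V → Γ}
    (hβ : support β ⊆ W) (hsum : ∑ v, β v = 0) :
    ∃ q : E → Γ, (∀ e ∈ support q, P e ∧ e ∈ G.edgesIn W) ∧ G.boundary q = β := by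
  rcases W.eq_empty_or_nonempty with rfl | ⟨x, hx⟩
  · rw [Set.subset_empty_iff, Function.support_eq_empty_iff] at hβ
    exact ⟨0, by simp, by simp [hβ]⟩
  have hpath (v : V) : ∃ q : E → Γ, (∀ e ∈ support q, P e ∧ e ∈ G.edgesIn W) ∧
      G.boundary q = Pi.single v (β v) - Pi.single x (β v) := by
    by_cases hv : v ∈ W
    · exact (hW v hv x hx).exists_boundary_eq (β v)
    · have hβv : β v = 0 := Function.notMem_support.1 fun h => hv (hβ h)
      exact ⟨0, by simp, by simp [hβv]⟩
  choose q hqP hq using hpath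
  refine ⟨∑ v, q v, fun e he => ?_, ?_⟩
  · obtain ⟨v, -, hv⟩ := Finset.exists_ne_zero_of_sum_ne_zero
      (by simpa [Finset.sum_apply] using he : ∑ v, q v e ≠ 0)
    exact hqP v e hv
  · have hx0 : ∑ v, (Pi.single x (β v) : V → Γ) = 0 := by
      simpa [hsum] using (map_sum (AddMonoidHom.single (fun _ : V => Γ) x) β Finset.univ).symm
    rw [map_sum, Finset.sum_congr rfl fun v _ => hq v, Finset.sum_sub_distrib, hx0, sub_zero,
      Finset.univ_sum_single]

theorem ConnectedOn.exists_boundary_add_eq [Fintype V] {W : Set V} (hW : G.ConnectedOn W P)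
    {β : V → Γ} {ψ : E → Γ} (hψ : G.outflow W ψ = ∑ v, W.indicator β v) :
    ∃ q : E → Γ, (∀ e ∈ support q, P e ∧ e ∈ G.edgesIn W) ∧
      ∀ v ∈ W, G.boundary (ψ + q) v = β v := by
  obtain ⟨q, hq, hqbd⟩ := hW.exists_boundary_eq (β := W.indicator (β - G.boundary ψ))
    (Set.support_indicator.trans_subset Set.inter_subset_left) (by
      simp only [Set.indicator_sub', Pi.sub_apply, Finset.sum_sub_distrib,
        ← outflow_eq_sum_boundary, hψ, sub_self])
  refine ⟨q, hq, fun v hv => ?_⟩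
  rw [map_add, hqbd, Pi.add_apply, Set.indicator_of_mem hv, Pi.sub_apply, add_sub_cancel]

end Reaches

section UnitFlow

variable {V E : Type} [Fintype E] {G : Multigraph V E} {A : E → ℤ → Prop} {x y : V}

/-- `p` sends one unit from `x` to `y`, and `A` holds for each edge of its support together with
the value carried there. A path from `x` to `y` is such a `p`, equal to `1` on the edges it uses
from source to target and to `-1` on those it uses backwards. -/
structure IsUnitFlow (G : Multigraph V E) (A : E → ℤ → Prop) (x y : V) (p : E → ℤ) : Prop where
  allowed : ∀ e ∈ support p, A e (p e)
  boundary_eq : G.boundary p = Pi.single x 1 - Pi.single y 1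

theorem IsUnitFlow.add_single {p : E → ℤ} {z w : V} {e : E} {c : ℤ} (hp : G.IsUnitFlow A x z p)
    (he : e ∉ support p) (hA : A e c)
    (harc : (c = 1 ∧ G.src e = z ∧ G.tgt e = w) ∨ (c = -1 ∧ G.src e = w ∧ G.tgt e = z)) :
    G.IsUnitFlow A x w (p + Pi.single e c) := by
  have hpe : p e = 0 := Function.notMem_support.1 he
  refine ⟨fun d hd => ?_, ?_⟩
  · rcases eq_or_ne d e with rfl | hde
    · simpa [hpe] using hA
    · simpa [hde] using hp.allowed d (by simpa [hde] using hd)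
  · rw [map_add, hp.boundary_eq, boundary_single]
    rcases harc with ⟨rfl, rfl, rfl⟩ | ⟨rfl, rfl, rfl⟩
    · abel
    · rw [Pi.single_neg, Pi.single_neg]
      abel

theorem IsUnitFlow.exists_insert {S : Set V}
    (hS : ∀ z ∈ S, ∃ p, G.IsUnitFlow A x z p ∧ support p ⊆ G.edgesIn S) {z w : V} (hz : z ∈ S)
    (hw : w ∉ S) {e : E} {c : ℤ} (hA : A e c)
    (harc : (c = 1 ∧ G.src e = z ∧ G.tgt e = w) ∨ (c = -1 ∧ G.src e = w ∧ G.tgt e = z)) :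
    ∀ z ∈ insert w S, ∃ p, G.IsUnitFlow A x z p ∧ support p ⊆ G.edgesIn (insert w S) := by
  have hmono : G.edgesIn S ⊆ G.edgesIn (insert w S) := edgesIn_mono (Set.subset_insert w S)
  rintro v (rfl | hv)
  · obtain ⟨p, hp, hpS⟩ := hS z hz
    have he : e ∉ G.edgesIn S := by
      rintro ⟨hs, ht⟩
      rcases harc with ⟨-, -, rfl⟩ | ⟨-, rfl, -⟩ <;> contradiction
    refine ⟨p + Pi.single e c, hp.add_single (fun h => he (hpS h)) hA harc, fun d hd => ?_⟩
    rcases eq_or_ne d e with rfl | hde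
    · rcases harc with ⟨-, rfl, rfl⟩ | ⟨-, rfl, rfl⟩
      · exact ⟨Or.inr hz, Or.inl rfl⟩
      · exact ⟨Or.inl rfl, Or.inr hz⟩
    · exact hmono (hpS (by simpa [hde] using hd))
  · obtain ⟨p, hp, hpS⟩ := hS v hv
    exact ⟨p, hp, hpS.trans hmono⟩

theorem exists_isUnitFlow [Finite V]
    (h : ∀ S : Set V, x ∈ S → (∀ e, A e 1 → G.src e ∈ S → G.tgt e ∈ S) →
      (∀ e, A e (-1) → G.tgt e ∈ S → G.src e ∈ S) → y ∈ S) :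
    ∃ p, G.IsUnitFlow A x y p := by
  obtain ⟨S, hxS, hS⟩ := Finite.exists_le_maximal
    (p := fun S : Set V => ∀ z ∈ S, ∃ p, G.IsUnitFlow A x z p ∧ support p ⊆ G.edgesIn S)
    (a := {x}) (by
      rintro z rfl
      exact ⟨0, ⟨by simp, by simp⟩, by simp⟩)
  rw [Set.singleton_subset_iff] at hxS
  have hclosed {z w : V} {e : E} {c : ℤ} (hA : A e c) (hz : z ∈ S)
      (harc : (c = 1 ∧ G.src e = z ∧ G.tgt e = w) ∨ (c = -1 ∧ G.src e = w ∧ G.tgt e = z)) :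
      w ∈ S := by
    by_contra hw
    exact hw (hS.le_of_ge (IsUnitFlow.exists_insert hS.prop hz hw hA harc)
      (Set.subset_insert w S) (Set.mem_insert w S))
  obtain ⟨p, hp, -⟩ := hS.prop y <| h S hxS
    (fun e hA hs => hclosed hA hs (Or.inl ⟨rfl, rfl, rfl⟩))
    (fun e hA ht => hclosed hA ht (Or.inr ⟨rfl, rfl, rfl⟩))
  exact ⟨p, hp⟩

end UnitFlow

section Menger

variable {V E : Type} [Fintype E] {G : Multigraph V E} {x y : V}

theorem outflow_eq_ncard_of_saturated {S : Set V} {F : Set E} {h : E → ℤ} (hF : support h ⊆ F)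
    (hout : ∀ e ∈ F, G.src e ∈ S → G.tgt e ∉ S → h e = 1)
    (hin : ∀ e ∈ F, G.src e ∉ S → G.tgt e ∈ S → h e = -1) :
    G.outflow S h = (G.cutEdges S ∩ F).ncard := by
  rw [natCast_ncard_eq_sum]
  refine Finset.sum_congr rfl fun e _ => ?_
  by_cases he : e ∈ F
  · by_cases hs : G.src e ∈ S <;> by_cases ht : G.tgt e ∈ S
    · simp [cutEdges, hs, ht]
    · simp [cutEdges, hs, ht, he, hout e he hs ht]
    · simp [cutEdges, hs, ht, he, hin e he hs ht]
    · simp [cutEdges, hs, ht]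
  · simp [he, Function.notMem_support.1 fun h => he (hF h)]

/-- The edge form of Menger's theorem, with the `k` edge-disjoint paths added up to a flow. -/
theorem exists_boundary_eq_of_le_ncard_cutEdges_inter [Finite V] {F : Set E} {k : ℕ}
    (hF : ∀ S : Set V, x ∈ S → y ∉ S → k ≤ (G.cutEdges S ∩ F).ncard) :
    ∃ h : E → ℤ, (∀ e, |h e| ≤ 1) ∧ support h ⊆ F ∧
      G.boundary h = Pi.single x (k : ℤ) - Pi.single y (k : ℤ) := by
  induction k with
  | zero => exact ⟨0, by simp, by simp, by simp⟩
  | succ k ih =>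
    obtain ⟨h, hle, hsupp, hbd⟩ := ih fun S hx hy => (Nat.le_succ k).trans (hF S hx hy)
    obtain ⟨p, hp⟩ : ∃ p, G.IsUnitFlow (fun e c => e ∈ F ∧ |h e + c| ≤ 1) x y p := by
      refine exists_isUnitFlow fun S hx hout hin => by_contra fun hy => ?_
      have hflow : G.outflow S h = (G.cutEdges S ∩ F).ncard := by
        refine outflow_eq_ncard_of_saturated hsupp (fun e he hs ht => ?_) (fun e he hs ht => ?_)
        · have := mt (fun h1 => hout e ⟨he, h1⟩ hs) ht
          have := hle e
          rw [abs_le] at *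
          omega
        · have := mt (fun h1 => hin e ⟨he, h1⟩ ht) hs
          have := hle e
          rw [abs_le] at *
          omega
      rw [G.outflow_eq_of_boundary_eq hx hy hbd] at hflow
      have := hF S hx hy
      omega
    refine ⟨h + p, fun e => ?_, fun e he => ?_, ?_⟩
    · by_cases hpe : p e = 0
      · simpa [hpe] using hle e
      · exact (hp.allowed e hpe).2
    · by_cases hpe : p e = 0
      · exact hsupp (by simpa [hpe] using he)
      · exact (hp.allowed e hpe).1
    · rw [map_add, hbd, hp.boundary_eq, Nat.cast_succ, Pi.single_add, Pi.single_add]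
      abel

end Menger

section ClosedTrail

variable {V E : Type} [Fintype E] {G : Multigraph V E}

/-- An integer flow with values in `{-1, 0, 1}`, that is, a flow with values less than two. -/
structure IsTwoFlow (G : Multigraph V E) (f : E → ℤ) : Prop where
  isFlow : G.IsFlow f
  abs_le_one : ∀ e, |f e| ≤ 1

/-- `g` is the integer flow around a closed trail with vertex set `W`: its support is a connected
spanning subgraph of `W`, and every edge of it carries one unit. -/
structure IsClosedTrail (G : Multigraph V E) (W : Set V) (g : E → ℤ) : Prop
    extends G.IsTwoFlow g where
  support_subset : support g ⊆ G.edgesIn W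
  connectedOn : G.ConnectedOn W (· ∈ support g)

theorem IsTwoFlow.isClosedTrail_indicator {g : E → ℤ} (hg : G.IsTwoFlow g) (x : V) :
    G.IsClosedTrail {v | G.Reaches (· ∈ support g) x v}
      ((G.edgesIn {v | G.Reaches (· ∈ support g) x v}).indicator g) := by
  refine ⟨⟨?_, fun e => ?_⟩, Set.support_indicator.trans_subset Set.inter_subset_left, ?_⟩
  · rw [isFlow_iff_boundary_eq_zero]
    exact boundary_indicator_edgesIn_eq_zero ((G.isFlow_iff_boundary_eq_zero g).1 hg.isFlow)
      (Set.disjoint_left.2 fun e he => notMem_cutEdges_setOf_reaches x he)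
  · rw [Set.indicator_apply]
    split_ifs
    · exact hg.abs_le_one e
    · simp
  · refine fun u hu v hv => (connectedOn_setOf_reaches G _ x u hu v hv).mono ?_
    rintro e ⟨he, hs, ht⟩
    rw [Set.support_indicator]
    exact ⟨⟨⟨hs, ht⟩, he⟩, hs, ht⟩

theorem outflow_nonpos {S : Set V} {h : E → ℤ}
    (hout : ∀ e, G.src e ∈ S → G.tgt e ∉ S → h e ≤ 0)
    (hin : ∀ e, G.src e ∉ S → G.tgt e ∈ S → 0 ≤ h e) : G.outflow S h ≤ 0 := by
  refine Finset.sum_nonpos fun e _ => ?_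
  by_cases hs : G.src e ∈ S <;> by_cases ht : G.tgt e ∈ S
  · simp [hs, ht]
  · simpa [hs, ht] using hout e hs ht
  · simpa [hs, ht] using hin e hs ht
  · simp [hs, ht]

theorem exists_isUnitFlow_of_boundary_eq [Finite V] {h : E → ℤ} (hle : ∀ e, |h e| ≤ 1) {x y : V}
    {c : ℤ} (hc : 0 < c) (hbd : G.boundary h = Pi.single x c - Pi.single y c) :
    ∃ p, G.IsUnitFlow (fun e a => h e = a) x y p := by
  refine exists_isUnitFlow fun S hx hout hin => by_contra fun hy => ?_
  refine hc.not_ge ((G.outflow_eq_of_boundary_eq hx hy hbd).ge.trans (outflow_nonpos ?_ ?_))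
  · intro e hs ht
    have hne : h e ≠ 1 := fun h1 => ht (hout e h1 hs)
    have := abs_le.1 (hle e)
    omega
  · intro e hs ht
    have hne : h e ≠ -1 := fun h1 => hs (hin e h1 ht)
    have := abs_le.1 (hle e)
    omega

/-- The flow is obtained by reversing one of two edge-disjoint paths from `x` to `y`. -/
theorem exists_isTwoFlow_reaches [Finite V] {F : Set E} {x y : V}
    (hF : ∀ S : Set V, x ∈ S → y ∉ S → 2 ≤ (G.cutEdges S ∩ F).ncard) :
    ∃ g, G.IsTwoFlow g ∧ support g ⊆ F ∧ G.Reaches (· ∈ support g) x y := by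
  obtain ⟨h, hle, hhF, hbd⟩ := exists_boundary_eq_of_le_ncard_cutEdges_inter hF
  obtain ⟨p, hp⟩ := exists_isUnitFlow_of_boundary_eq hle (by simp) hbd
  have hflip (e : E) : (h - (p + p)) e = h e ∨ (h - (p + p)) e = -h e := by
    by_cases hpe : p e = 0
    · simp [hpe]
    · have := hp.allowed e hpe
      simp only [Pi.sub_apply, Pi.add_apply]
      omega
  have hsupp : support (h - (p + p)) = support h := by
    ext e
    simp only [Function.mem_support]
    have := hflip e
    omega
  refine ⟨h - (p + p), ⟨?_, fun e => ?_⟩, hsupp.trans_subset hhF, ?_⟩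
  · rw [isFlow_iff_boundary_eq_zero, map_sub, map_add, hbd, hp.boundary_eq, Nat.cast_ofNat,
      ← one_add_one_eq_two, Pi.single_add, Pi.single_add]
    abel
  · rcases hflip e with he | he
    · exact he ▸ hle e
    · rw [he, abs_neg]
      exact hle e
  · rw [hsupp]
    exact reaches_of_boundary_eq (by simp) hbd

end ClosedTrail

section AttachedTrail

variable {V E : Type} {G : Multigraph V E} {X U : Set V}

theorem exists_joins_of_mem_cutEdges (hU : Disjoint U X) {e : E} (heU : e ∈ G.cutEdges U)
    (heX : e ∉ G.edgesIn Xᶜ) : ∃ z ∈ U, G.joins e z X := by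
  have hUX {v : V} (hv : v ∈ U) : v ∉ X := Set.disjoint_left.1 hU hv
  rcases heU with ⟨hs, -⟩ | ⟨-, ht⟩
  · exact ⟨_, hs, Or.inl ⟨rfl, by_contra fun h => heX ⟨hUX hs, h⟩⟩⟩
  · exact ⟨_, ht, Or.inr ⟨rfl, by_contra fun h => heX ⟨h, hUX ht⟩⟩⟩

theorem joins.mem_cutEdges_inter_edgesIn {e : E} {z : V} (h : G.joins e z X)
    (hU : Disjoint U X) (hz : z ∈ U) : e ∈ G.cutEdges U ∩ G.edgesIn (X ∪ U) := by
  have hXU {v : V} (hv : v ∈ X) : v ∉ U := Set.disjoint_right.1 hU hv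
  rcases h with ⟨rfl, h⟩ | ⟨rfl, h⟩
  · exact ⟨Or.inl ⟨hz, hXU h⟩, Or.inr hz, Or.inl h⟩
  · exact ⟨Or.inr ⟨hXU h, hz⟩, Or.inl h, Or.inr hz⟩

theorem ncard_cutEdges_inter_add_ncard_cutEdges_diff_le [Finite E] (G : Multigraph V E)
    (U S : Set V) (F : Set E) :
    (G.cutEdges (U ∩ S) ∩ F).ncard + (G.cutEdges (U \ S) ∩ F).ncard ≤
      2 * (G.cutEdges S ∩ G.edgesIn U).ncard + (G.cutEdges U ∩ F).ncard := by
  set D := G.cutEdges S ∩ G.edgesIn U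
  set K := G.cutEdges U ∩ F
  have hinter : (G.cutEdges (U ∩ S) ∩ F).ncard ≤ D.ncard + (K ∩ G.cutEdges (U ∩ S)).ncard := by
    refine (Set.ncard_le_ncard fun e he => ?_).trans (Set.ncard_union_le _ _)
    simp only [D, K, cutEdges, edgesIn, Set.mem_inter_iff, Set.mem_union, Set.mem_ofPred_eq] at *
    tauto
  have hdiff : (G.cutEdges (U \ S) ∩ F).ncard ≤ D.ncard + (K \ G.cutEdges (U ∩ S)).ncard := by
    refine (Set.ncard_le_ncard fun e he => ?_).trans (Set.ncard_union_le _ _)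
    simp only [D, K, cutEdges, edgesIn, Set.mem_inter_iff, Set.mem_union, Set.mem_sdiff,
      Set.mem_ofPred_eq] at *
    tauto
  have hK := Set.ncard_inter_add_ncard_sdiff_eq_ncard K (G.cutEdges (U ∩ S))
  omega

/-- `U` is a minimal nonempty vertex set such that at most one edge of `G − X` leaves it. -/
def IsLeafBlock (G : Multigraph V E) (X U : Set V) : Prop :=
  Minimal (fun U : Set V => U.Nonempty ∧ Disjoint U X ∧
    (G.cutEdges U ∩ G.edgesIn Xᶜ).ncard ≤ 1) U

theorem exists_isLeafBlock [Finite V] (G : Multigraph V E) (hX : X ≠ Set.univ) :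
    ∃ U, G.IsLeafBlock X U := by
  obtain ⟨U, -, hU⟩ := Finite.exists_le_minimal (a := Xᶜ)
    (p := fun U : Set V => U.Nonempty ∧ Disjoint U X ∧
      (G.cutEdges U ∩ G.edgesIn Xᶜ).ncard ≤ 1)
    ⟨Set.nonempty_compl.2 hX, disjoint_compl_left, by
      rw [(disjoint_edgesIn_cutEdges Xᶜ).symm.inter_eq, Set.ncard_empty]
      exact zero_le_one⟩
  exact ⟨U, hU⟩

theorem IsLeafBlock.two_le_ncard [Finite E] (hU : G.IsLeafBlock X U) {S : Set V}
    (hS : (U ∩ S).Nonempty) (hS' : (U \ S).Nonempty) : 2 ≤ (G.cutEdges S ∩ G.edgesIn U).ncard := by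
  have hlt {T : Set V} (hT : T.Nonempty) (hTU : T ⊂ U) :
      2 ≤ (G.cutEdges T ∩ G.edgesIn Xᶜ).ncard := by
    by_contra! h
    exact hU.not_prop_of_lt hTU ⟨hT, hU.prop.2.1.mono_left hTU.subset, Nat.le_of_lt_succ h⟩
  obtain ⟨x, hxU, hxS⟩ := hS
  obtain ⟨y, hyU, hyS⟩ := hS'
  have hinter := hlt (T := U ∩ S) ⟨x, hxU, hxS⟩ ⟨Set.inter_subset_left, fun h => hyS (h hyU).2⟩
  have hdiff := hlt (T := U \ S) ⟨y, hyU, hyS⟩ ⟨Set.sdiff_subset, fun h => (h hxU).2 hxS⟩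
  have hsum := ncard_cutEdges_inter_add_ncard_cutEdges_diff_le G U S (G.edgesIn Xᶜ)
  have hle := hU.prop.2.2
  omega

theorem IsLeafBlock.exists_joins_joins [Finite E] (hG : G.EdgeConnected 3) (hX : X.Nonempty)
    (hU : G.IsLeafBlock X U) :
    ∃ d e, d ≠ e ∧ ∃ x ∈ U, ∃ y ∈ U, G.joins d x X ∧ G.joins e y X := by
  obtain ⟨hne, hUX, hle⟩ := hU.prop
  obtain ⟨z, hz⟩ := hX
  have hcut := hG.le_ncard_cutEdges hne fun h => Set.disjoint_right.1 hUX hz (h ▸ Set.mem_univ z)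
  have hsplit := Set.ncard_inter_add_ncard_sdiff_eq_ncard (G.cutEdges U) (G.edgesIn Xᶜ)
  obtain ⟨d, ⟨hdU, hdX⟩, e, ⟨heU, heX⟩, hde⟩ :=
    Set.one_lt_ncard_iff_nontrivial.1 (show 1 < (G.cutEdges U \ G.edgesIn Xᶜ).ncard by omega)
  obtain ⟨x, hx, hdx⟩ := exists_joins_of_mem_cutEdges hUX hdU hdX
  obtain ⟨y, hy, hey⟩ := exists_joins_of_mem_cutEdges hUX heU heX
  exact ⟨d, e, hde, x, hx, y, hy, hdx, hey⟩

/-- The trail lives in a leaf block of the bridge tree of `G − X`: by 3-edge-connectivity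
at least two edges join that block to `X`. -/
theorem EdgeConnected.exists_attached_isClosedTrail [Finite V] [Fintype E]
    (hG : G.EdgeConnected 3) (hX : X.Nonempty) (hX' : X ≠ Set.univ) :
    ∃ W g, G.IsClosedTrail W g ∧ W.Nonempty ∧ Disjoint W X ∧
      (G.cutEdges W ∩ G.edgesIn (X ∪ W)).Nontrivial := by
  obtain ⟨U, hU⟩ := G.exists_isLeafBlock hX'
  obtain ⟨d, e, hde, x, hx, y, hy, hdx, hey⟩ := hU.exists_joins_joins hG hX
  obtain ⟨g, hg, hgU, hxy⟩ := exists_isTwoFlow_reaches fun S hxS hyS =>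
    hU.two_le_ncard ⟨x, hx, hxS⟩ ⟨y, hy, hyS⟩
  have hWX : Disjoint {v | G.Reaches (· ∈ support g) x v} X :=
    hU.prop.2.1.mono_left fun v hv => mem_of_reaches
      (fun e he => Set.disjoint_left.1 (disjoint_edgesIn_cutEdges U) (hgU he)) hx hv
  exact ⟨_, _, hg.isClosedTrail_indicator x, ⟨x, .refl⟩, hWX, d,
    hdx.mem_cutEdges_inter_edgesIn hWX .refl, e, hey.mem_cutEdges_inter_edgesIn hWX hxy, hde⟩

end AttachedTrail

section GroupConnected

variable {V E Γ : Type} [AddCommGroup Γ] {G : Multigraph V E}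

theorem exists_ne_zero_add_eq (hΓ : 3 ≤ Nat.card Γ) (t : Γ) :
    ∃ u v : Γ, u ≠ 0 ∧ v ≠ 0 ∧ u + v = t := by
  obtain ⟨u, -, hu⟩ := Set.exists_mem_notMem_of_ncard_lt_ncard (s := {0, t}) (t := Set.univ)
    ((Set.ncard_insert_le 0 {t}).trans_lt (by rw [Set.ncard_singleton, Set.ncard_univ]; omega))
  rw [Set.mem_insert_iff, Set.mem_singleton_iff, not_or] at hu
  exact ⟨u, t - u, hu.1, sub_ne_zero.2 (Ne.symm hu.2), add_sub_cancel u t⟩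

theorem support_add_of_disjoint {f g : E → Γ} (h : Disjoint (support f) (support g)) :
    support (f + g) = support f ∪ support g := by
  ext e
  have he : f e ≠ 0 → g e = 0 := fun hf => Function.notMem_support.1 (Set.disjoint_left.1 h hf)
  by_cases hf : f e = 0
  · simp [hf]
  · simp [hf, he hf]

variable [Fintype E]

theorem exists_support_eq_singleton_outflow_eq {S : Set V} {e : E} (he : e ∈ G.cutEdges S) {u : Γ}
    (hu : u ≠ 0) : ∃ φ : E → Γ, support φ = {e} ∧ G.outflow S φ = u := by
  rcases he with ⟨hs, ht⟩ | ⟨hs, ht⟩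
  · refine ⟨Pi.single e u, Pi.support_single_of_ne hu, ?_⟩
    simp [outflow_single, hs, ht]
  · refine ⟨Pi.single e (-u), Pi.support_single_of_ne (neg_ne_zero.2 hu), ?_⟩
    simp [outflow_single, hs, ht]

theorem exists_support_eq_outflow_eq (hΓ : 3 ≤ Nat.card Γ) {M : Set E} {S : Set V}
    (hM : (G.cutEdges S ∩ M).Nontrivial) (t : Γ) :
    ∃ ψ : E → Γ, support ψ = M ∧ G.outflow S ψ = t := by
  obtain ⟨d, ⟨hdS, hdM⟩, e, ⟨heS, heM⟩, hde⟩ := hM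
  obtain ⟨a, -, ha, -⟩ := exists_ne_zero_add_eq hΓ (0 : Γ)
  set ψ₀ : E → Γ := (M \ {d, e}).indicator fun _ => a
  have hψ₀ : support ψ₀ = M \ {d, e} := by
    rw [Set.support_indicator, Function.support_const ha, Set.inter_univ]
  obtain ⟨u, v, hu, hv, huv⟩ := exists_ne_zero_add_eq hΓ (t - G.outflow S ψ₀)
  obtain ⟨φ, hφ, hφS⟩ := exists_support_eq_singleton_outflow_eq hdS hu
  obtain ⟨χ, hχ, hχS⟩ := exists_support_eq_singleton_outflow_eq heS hv
  have hφχ : support (φ + χ) = {d, e} := by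
    rw [support_add_of_disjoint (by simpa [hφ, hχ] using hde), hφ, hχ]
    rfl
  refine ⟨ψ₀ + (φ + χ), ?_, ?_⟩
  · rw [support_add_of_disjoint (by rw [hψ₀, hφχ]; exact Set.disjoint_sdiff_left), hψ₀, hφχ,
      Set.sdiff_union_self, Set.union_eq_self_of_subset_right (Set.pair_subset hdM heM)]
  · rw [map_add, map_add, hφS, hχS, huv, add_sub_cancel]

theorem IsTwoFlow.add_of_disjoint {f g : E → ℤ} (hf : G.IsTwoFlow f) (hg : G.IsTwoFlow g)
    (h : Disjoint (support f) (support g)) : G.IsTwoFlow (f + g) := by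
  refine ⟨hf.isFlow.add hg.isFlow, fun e => ?_⟩
  by_cases he : f e = 0
  · simpa [he] using hg.abs_le_one e
  · simpa [Function.notMem_support.1 (Set.disjoint_left.1 h he)] using hf.abs_le_one e

variable [Fintype V] {X W : Set V} {C D : Set E}

/-- Group connectivity of the subgraph induced on `X`, relaxed on `C`: every boundary on `X` of
total zero is attained by a function on the induced edges that is nonzero off `C`. -/
def GroupConnectedOff (G : Multigraph V E) (Γ : Type) [AddCommGroup Γ] (X : Set V) (C : Set E) :
    Prop :=
  ∀ β : V → Γ, support β ⊆ X → ∑ v, β v = 0 → ∃ ψ : E → Γ, support ψ ⊆ G.edgesIn X ∧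
    G.boundary ψ = β ∧ ∀ e ∈ G.edgesIn X \ C, ψ e ≠ 0

theorem groupConnectedOff_singleton [Nontrivial Γ] (G : Multigraph V E) (x : V) (C : Set E) :
    G.GroupConnectedOff Γ {x} C := by
  intro β hβ hsum
  obtain ⟨a, ha⟩ := exists_ne (0 : Γ)
  set ψ : E → Γ := (G.edgesIn {x}).indicator fun _ => a
  have hψ : support ψ ⊆ G.edgesIn {x} := Set.support_indicator.trans_subset Set.inter_subset_left
  refine ⟨ψ, hψ, ?_, fun e he => ?_⟩
  · rw [eq_zero_of_sum_eq_zero hsum (Function.support_subset_iff'.1 hβ)]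
    ext v
    by_cases hv : v ∈ ({x} : Set V)
    · obtain rfl : v = x := hv
      exact G.outflow_eq_zero_of_disjoint ((disjoint_edgesIn_cutEdges _).mono_left hψ)
    · exact boundary_eq_zero_of_support_subset_edgesIn hψ hv
  · simpa [ψ, he.1] using ha

theorem GroupConnectedOff.union (hΓ : 3 ≤ Nat.card Γ) (hX : G.GroupConnectedOff Γ X C)
    (hWX : Disjoint W X) (hW : G.ConnectedOn W (· ∈ D))
    (hatt : (G.cutEdges W ∩ G.edgesIn (X ∪ W)).Nontrivial) :
    G.GroupConnectedOff Γ (X ∪ W) (C ∪ D) := by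
  intro β hβ hsum
  have hcut : (G.cutEdges W ∩ (G.edgesIn (X ∪ W) \ G.edgesIn X)).Nontrivial :=
    hatt.mono fun e he => ⟨he.1, he.2,
      Set.disjoint_right.1 (disjoint_edgesIn_cutEdges_of_disjoint hWX.symm) he.1⟩
  obtain ⟨ψ, hψ, hψW⟩ := exists_support_eq_outflow_eq hΓ hcut (∑ v, W.indicator β v)
  obtain ⟨q, hq, hqbd⟩ := hW.exists_boundary_add_eq hψW
  have hψqXW : support (ψ + q) ⊆ G.edgesIn (X ∪ W) :=
    (Function.support_add _ _).trans (Set.union_subset (hψ.trans_subset Set.sdiff_subset)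
      fun e he => edgesIn_mono Set.subset_union_right (hq e he).2)
  have hrest : support (β - G.boundary (ψ + q)) ⊆ X := by
    refine Function.support_subset_iff'.2 fun v hvX => ?_
    rw [Pi.sub_apply, sub_eq_zero]
    by_cases hvW : v ∈ W
    · exact (hqbd v hvW).symm
    · have hvXW : v ∉ X ∪ W := not_or.2 ⟨hvX, hvW⟩
      rw [boundary_eq_zero_of_support_subset_edgesIn hψqXW hvXW,
        Function.support_subset_iff'.1 hβ v hvXW]
  obtain ⟨χ, hχX, hχbd, hχ⟩ := hX _ hrest (by
    simp only [Pi.sub_apply, Finset.sum_sub_distrib, sum_boundary, hsum, sub_self])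
  refine ⟨ψ + q + χ, ?_, by rw [map_add, hχbd, add_sub_cancel], fun e he => ?_⟩
  · exact (Function.support_add _ _).trans
      (Set.union_subset hψqXW (hχX.trans (edgesIn_mono Set.subset_union_left)))
  · obtain ⟨heXW, heCD⟩ := he
    have hqe : q e = 0 := Function.notMem_support.1 fun h => heCD (Or.inr (hq e h).1)
    simp only [Pi.add_apply, hqe, add_zero]
    by_cases heX : e ∈ G.edgesIn X
    · have hψe : ψ e = 0 := Function.notMem_support.1 fun h => (hψ.subset h).2 heX
      rw [hψe, zero_add]
      exact hχ e ⟨heX, fun h => heCD (Or.inl h)⟩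
    · rw [Function.support_subset_iff'.1 hχX e heX, add_zero]
      exact hψ.symm.subset ⟨heXW, heX⟩

theorem EdgeConnected.exists_groupConnectedOff_univ (hΓ : 3 ≤ Nat.card Γ)
    (hG : G.EdgeConnected 3) :
    ∃ f, G.IsTwoFlow f ∧ G.GroupConnectedOff Γ Set.univ (support f) := by
  obtain ⟨a, -, ha, -⟩ := exists_ne_zero_add_eq hΓ (0 : Γ)
  have hnt : Nontrivial Γ := nontrivial_of_ne a 0 ha
  obtain ⟨x⟩ : Nonempty V := (hG ∅ (by simp)).1
  obtain ⟨X, hxX, hX⟩ := Finite.exists_le_maximal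
    (p := fun X : Set V => ∃ f, G.IsTwoFlow f ∧ support f ⊆ G.edgesIn X ∧
      G.GroupConnectedOff Γ X (support f)) (a := {x})
    ⟨0, ⟨by simp [isFlow_iff_boundary_eq_zero], by simp⟩, by simp,
      G.groupConnectedOff_singleton x _⟩
  obtain ⟨f, hf, hfX, hXf⟩ := hX.prop
  suffices hXu : X = Set.univ from ⟨f, hf, hXu ▸ hXf⟩
  by_contra hXu
  obtain ⟨W, g, hg, ⟨w, hw⟩, hWX, hatt⟩ :=
    hG.exists_attached_isClosedTrail ⟨x, hxX rfl⟩ hXu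
  have hdisj : Disjoint (support f) (support g) := Set.disjoint_left.2 fun e hef heg =>
    Set.disjoint_left.1 hWX (hg.support_subset heg).1 (hfX hef).1
  refine Set.disjoint_left.1 hWX hw (hX.le_of_ge ⟨f + g, hf.add_of_disjoint hg.toIsTwoFlow hdisj,
    ?_, ?_⟩ Set.subset_union_left (Or.inr hw))
  · rw [support_add_of_disjoint hdisj]
    exact Set.union_subset (hfX.trans (edgesIn_mono Set.subset_union_left))
      (hg.support_subset.trans (edgesIn_mono Set.subset_union_right))
  · rw [support_add_of_disjoint hdisj]
    exact hXf.union hΓ hWX hg.connectedOn hatt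

end GroupConnected

section Degrees

variable {V E : Type} {G : Multigraph V E}

/-- The degree of `v` in the spanning subgraph with edge set `C`, loops counted twice. -/
noncomputable def degreeIn (G : Multigraph V E) (C : Set E) (v : V) : ℕ :=
  {e ∈ C | G.src e = v}.ncard + {e ∈ C | G.tgt e = v}.ncard

theorem degreeIn_univ (G : Multigraph V E) (v : V) : G.degreeIn Set.univ v = G.degree v := by
  simp [degreeIn, degree]

theorem degreeIn_le_degree [Finite E] (G : Multigraph V E) (C : Set E) (v : V) :
    G.degreeIn C v ≤ G.degree v :=
  Nat.add_le_add (Set.ncard_le_ncard fun _ he => he.2) (Set.ncard_le_ncard fun _ he => he.2)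

theorem sum_degreeIn [Fintype V] [Finite E] (G : Multigraph V E) (C : Set E) :
    ∑ v, G.degreeIn C v = 2 * C.ncard := by
  simp only [degreeIn, Finset.sum_add_distrib, sum_ncard_fiber, two_mul]

theorem EdgeConnected.le_degree [Finite E] [Nontrivial V] {k : ℕ} (hG : G.EdgeConnected k)
    (v : V) : k ≤ G.degree v := by
  obtain ⟨u, hu⟩ := exists_ne v
  have hcut := hG.le_ncard_cutEdges (Set.singleton_nonempty v)
    fun h => hu (h.symm.subset (Set.mem_univ u))
  refine hcut.trans ((Set.ncard_le_ncard ?_).trans (Set.ncard_union_le _ _))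
  rintro e (⟨hs, -⟩ | ⟨-, ht⟩)
  · exact Or.inl hs
  · exact Or.inr ht

variable [Fintype E]

theorem IsTwoFlow.intCast_sum_eq_ncard {f : E → ℤ} (hf : G.IsTwoFlow f) (P : E → Prop) :
    ((∑ e, if P e then f e else 0 : ℤ) : ZMod 2) = {e ∈ support f | P e}.ncard := by
  have hodd (e : E) : ((f e : ℤ) : ZMod 2) = if f e = 0 then 0 else 1 := by
    obtain h | h | h : f e = -1 ∨ f e = 0 ∨ f e = 1 := by
      have := abs_le.1 (hf.abs_le_one e)
      omega
    all_goals simp [h]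
  rw [natCast_ncard_eq_sum, Int.cast_sum]
  refine Finset.sum_congr rfl fun e _ => ?_
  by_cases hP : P e <;> simp [hP, hodd, ite_not]

theorem IsTwoFlow.even_degreeIn_support {f : E → ℤ} (hf : G.IsTwoFlow f) (v : V) :
    Even (G.degreeIn (support f) v) := by
  rw [← ZMod.natCast_eq_zero_iff_even, degreeIn, Nat.cast_add, ← hf.intCast_sum_eq_ncard,
    ← hf.intCast_sum_eq_ncard, hf.isFlow v, CharTwo.add_self_eq_zero]

theorem EdgeConnected.ncard_support_add_le [Fintype V] (hG : G.EdgeConnected 3) {f : E → ℤ}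
    (hf : G.IsTwoFlow f) :
    (support f).ncard + 2 * Fintype.card V ≤ 2 * Fintype.card E + 2 := by
  have hle : (support f).ncard ≤ Fintype.card E :=
    (Set.ncard_le_ncard (Set.subset_univ _)).trans_eq
      (by rw [Set.ncard_univ, Nat.card_eq_fintype_card])
  rcases subsingleton_or_nontrivial V with hV | hV
  · have := Fintype.card_le_one_iff_subsingleton.2 hV
    omega
  have hdeg (v : V) : G.degreeIn (support f) v + 4 ≤ 2 * G.degreeIn Set.univ v := by
    obtain ⟨k, hk⟩ := hf.even_degreeIn_support v
    have := hG.le_degree v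
    have := G.degreeIn_le_degree (support f) v
    rw [degreeIn_univ]
    omega
  have hsum := Finset.sum_le_sum fun v (_ : v ∈ Finset.univ) => hdeg v
  rw [Finset.sum_add_distrib, ← Finset.mul_sum, sum_degreeIn, sum_degreeIn, Set.ncard_univ,
    Nat.card_eq_fintype_card, Finset.sum_const, Finset.card_univ, smul_eq_mul] at hsum
  omega

end Degrees

section FlowCount

variable {V E : Type} [Fintype E] {G : Multigraph V E}

theorem IsTwoFlow.mul_self_eq_one {f : E → ℤ} (hf : G.IsTwoFlow f) {e : E} (he : e ∈ support f) :
    f e * f e = 1 := by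
  rw [← abs_mul_abs_self, le_antisymm (hf.abs_le_one e) (Int.one_le_abs he), one_mul]

theorem IsTwoFlow.exists_card_mul_ncard_le {B : Type} [AddCommGroup B] [Finite B] {f : E → ℤ}
    (hf : G.IsTwoFlow f) {ψ : E → B} (hψ : ∀ e ∉ support f, ψ e ≠ 0) :
    ∃ c : B, Nat.card B * {e | ψ e + f e • c = 0}.ncard ≤ (support f).ncard := by
  obtain ⟨c, hc⟩ := exists_card_mul_ncard_fiber_le (support f) fun e => -(f e • ψ e)
  refine ⟨c, le_trans (Nat.mul_le_mul_left _ (Set.ncard_le_ncard fun e he => ?_)) hc⟩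
  have hef : e ∈ support f := by
    refine by_contra fun hef => hψ e hef ?_
    simpa [Function.notMem_support.1 hef] using he
  refine ⟨hef, ?_⟩
  rw [eq_neg_of_add_eq_zero_left he, smul_neg, neg_neg, smul_smul, hf.mul_self_eq_one hef,
    one_smul]

theorem card_pow_le_card_flows_mul {A : Type} [AddCommGroup A] [Finite A] [Fintype V] [Nonempty V]
    (G : Multigraph V E) (Z : Set E) :
    Nat.card A ^ (Fintype.card E + 1) ≤
      Nat.card {φ : E → A // G.IsFlow φ ∧ ∀ e ∈ Z, φ e = 0} *
        Nat.card A ^ (Fintype.card V + Z.ncard) := by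
  obtain ⟨r⟩ := ‹Nonempty V›
  let T : (E → A) →+ ({v // v ≠ r} → A) × (Z → A) :=
    { toFun := fun φ => (fun v => G.boundary φ v, fun e => φ e)
      map_zero' := by ext <;> simp
      map_add' := fun φ ψ => by ext <;> simp }
  have hker : Nat.card T.ker = Nat.card {φ : E → A // G.IsFlow φ ∧ ∀ e ∈ Z, φ e = 0} := by
    refine Nat.card_congr (Equiv.subtypeEquivRight fun φ => ?_)
    have hr : (∀ v, v ≠ r → G.boundary φ v = 0) ↔ G.IsFlow φ := by
      rw [isFlow_iff_boundary_eq_zero]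
      exact ⟨eq_zero_of_sum_eq_zero (G.sum_boundary φ), fun h v _ => congrFun h v⟩
    rw [← hr]
    simp [T, AddMonoidHom.mem_ker, funext_iff]
  have hT := card_le_card_ker_mul_card T
  rw [hker, Nat.card_prod, Nat.card_fun, Nat.card_fun, Nat.card_fun,
    Nat.card_eq_fintype_card (α := E), ← pow_add, Nat.card_coe_set_eq] at hT
  calc Nat.card A ^ (Fintype.card E + 1) = Nat.card A ^ Fintype.card E * Nat.card A := pow_succ ..
    _ ≤ _ := Nat.mul_le_mul_right _ hT
    _ = _ := by rw [mul_assoc, ← pow_succ, ← card_subtype_ne_add_one r]; congr 2; omega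

/-- The nowhere-zero `Γ`-flows of `G`. -/
abbrev NowhereZeroFlow (G : Multigraph V E) (Γ : Type) [AddCommGroup Γ] : Type :=
  {φ : E → Γ // G.IsFlow φ ∧ ∀ e, φ e ≠ 0}

variable {A B : Type} [AddCommGroup A] [AddCommGroup B]

theorem IsTwoFlow.card_flows_le_card_nowhereZeroFlow [Finite A] [Finite B] {f : E → ℤ}
    (hf : G.IsTwoFlow f) {a : A} (ha : a ≠ 0) {χ : E → B} (hχ : G.IsFlow χ)
    (hχf : ∀ e, χ e = 0 → e ∈ support f) :
    Nat.card {φ : E → A // G.IsFlow φ ∧ ∀ e ∈ {e | χ e = 0}, φ e = 0} ≤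
      Nat.card (G.NowhereZeroFlow (A × B)) := by
  refine Nat.card_le_card_of_injective (fun φ => ⟨fun e => (φ.1 e + f e • a, χ e),
    (φ.2.1.add (hf.isFlow.zsmul_const a)).prodMk hχ, fun e he => ?_⟩) fun φ φ' h => ?_
  · obtain ⟨hfst, hsnd⟩ := Prod.mk_eq_zero.1 he
    rw [φ.2.2 e hsnd, zero_add] at hfst
    refine ha ?_
    rw [← one_smul ℤ a, ← hf.mul_self_eq_one (hχf e hsnd), mul_smul, hfst, smul_zero]
  · ext e
    have he := congrFun (congrArg Subtype.val h) e
    exact add_right_cancel (congrArg Prod.fst he)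

theorem EdgeConnected.exists_card_pow_le [Fintype V] (hA : 2 ≤ Nat.card A) (hB : 3 ≤ Nat.card B)
    (hG : G.EdgeConnected 3) :
    ∃ z : ℕ, Nat.card B * z + 2 * Fintype.card V ≤ 2 * Fintype.card E + 2 ∧
      Nat.card A ^ (Fintype.card E + 1) ≤
        Nat.card (G.NowhereZeroFlow (A × B)) * Nat.card A ^ (Fintype.card V + z) := by
  have : Finite A := Nat.finite_of_card_ne_zero (by omega)
  have : Finite B := Nat.finite_of_card_ne_zero (by omega)
  have : Nonempty V := (hG ∅ (by simp)).1
  have : Nontrivial A := Finite.one_lt_card_iff_nontrivial.1 hA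
  obtain ⟨a, ha⟩ := exists_ne (0 : A)
  obtain ⟨f, hf, hcon⟩ := hG.exists_groupConnectedOff_univ hB
  obtain ⟨ψ, -, hψ, hψf⟩ := hcon 0 (by simp) (by simp)
  rw [← isFlow_iff_boundary_eq_zero] at hψ
  have hψf' (e : E) (he : e ∉ support f) : ψ e ≠ 0 := hψf e ⟨⟨trivial, trivial⟩, he⟩
  obtain ⟨c, hc⟩ := hf.exists_card_mul_ncard_le hψf'
  have hχf (e : E) (he : ψ e + f e • c = 0) : e ∈ support f := by
    refine by_contra fun hef => hψf' e hef ?_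
    simpa [Function.notMem_support.1 hef] using he
  refine ⟨_, (Nat.add_le_add_right hc _).trans (hG.ncard_support_add_le hf),
    (card_pow_le_card_flows_mul G _).trans (Nat.mul_le_mul_right _ ?_)⟩
  exact hf.card_flows_le_card_nowhereZeroFlow ha (hψ.add (hf.isFlow.zsmul_const c)) hχf

theorem rpow_le_of_pow_le_mul_pow {a N k l : ℕ} (ha : 1 ≤ a) (h : a ^ k ≤ N * a ^ l) {x : ℝ}
    (hx : x ≤ k - l) : (a : ℝ) ^ x ≤ N := by
  have ha' : (0 : ℝ) < a := by exact_mod_cast ha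
  refine (Real.rpow_le_rpow_of_exponent_le (by exact_mod_cast ha) hx).trans ?_
  rw [Real.rpow_sub ha', Real.rpow_natCast, Real.rpow_natCast, div_le_iff₀ (by positivity)]
  exact_mod_cast h

theorem EdgeConnected.rpow_le_card_nowhereZeroFlow [Fintype V] (hA : 2 ≤ Nat.card A)
    (hB : 3 ≤ Nat.card B) (hG : G.EdgeConnected 3) :
    (Nat.card A : ℝ) ^ ((1 - 2 / Nat.card B : ℝ) * (Fintype.card E - Fintype.card V + 1)) ≤
      Nat.card (G.NowhereZeroFlow (A × B)) := by
  obtain ⟨z, hz, hle⟩ := hG.exists_card_pow_le hA hB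
  refine rpow_le_of_pow_le_mul_pow (by omega) hle ?_
  have hB' : (0 : ℝ) < Nat.card B := by exact_mod_cast (by omega : 0 < Nat.card B)
  have hz' : (Nat.card B * z + 2 * Fintype.card V : ℝ) ≤ 2 * Fintype.card E + 2 := by
    exact_mod_cast hz
  have hzdiv : (z : ℝ) ≤ 2 / Nat.card B * (Fintype.card E - Fintype.card V + 1) := by
    rw [div_mul_eq_mul_div, le_div_iff₀ hB']
    linarith
  push_cast
  linarith

end FlowCount

section Contraction

variable {V E : Type} (G : Multigraph V E) {e : E} (he : G.src e ≠ G.tgt e)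

/-- The vertex map of the contraction of `e`: the target of `e` is sent to its source, and every
other vertex to itself. -/
noncomputable def contractVertex (v : V) : {v // v ≠ G.tgt e} :=
  if hv : v = G.tgt e then ⟨G.src e, he⟩ else ⟨v, hv⟩

/-- The contraction `G / e` of an edge `e` which is not a loop. Its vertices are those of `G` other
than the target of `e`, so that the contracted edge is represented by the source of `e`. -/
noncomputable def contract : Multigraph {v // v ≠ G.tgt e} {d // d ≠ e} where
  src d := G.contractVertex he (G.src d)
  tgt d := G.contractVertex he (G.tgt d)

theorem contractVertex_of_ne {v : V} (hv : v ≠ G.tgt e) : G.contractVertex he v = ⟨v, hv⟩ :=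
  dif_neg hv

theorem contractVertex_src_eq_contractVertex_tgt :
    G.contractVertex he (G.src e) = G.contractVertex he (G.tgt e) := by
  simp [contractVertex, he]

variable {G}

theorem Reaches.contract {P : E → Prop} {u v : V} (h : G.Reaches P u v) :
    (G.contract he).Reaches (fun d => P d) (G.contractVertex he u) (G.contractVertex he v) := by
  induction h with
  | refl => exact .refl
  | tail _ hab ih =>
    obtain ⟨d, hd, hab⟩ := hab
    rcases eq_or_ne d e with rfl | hde
    · have hloop := G.contractVertex_src_eq_contractVertex_tgt he
      rcases hab with ⟨rfl, rfl⟩ | ⟨rfl, rfl⟩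
      · rwa [← hloop]
      · rwa [hloop]
    · refine ih.tail ⟨⟨d, hde⟩, hd, ?_⟩
      rcases hab with ⟨rfl, rfl⟩ | ⟨rfl, rfl⟩
      · exact Or.inl ⟨rfl, rfl⟩
      · exact Or.inr ⟨rfl, rfl⟩

theorem EdgeConnected.contract {k : ℕ} (hG : G.EdgeConnected k) :
    (G.contract he).EdgeConnected k := by
  intro D hD
  rw [← Set.ncard_image_of_injective D Subtype.val_injective] at hD
  refine ⟨⟨⟨G.src e, he⟩⟩, fun u v => ?_⟩
  have huv := ((hG _ hD).2 u v).contract he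
  rw [contractVertex_of_ne G he u.2, contractVertex_of_ne G he v.2] at huv
  exact huv.mono fun d hd hdD => hd ⟨d, hdD, rfl⟩

variable [Fintype E] {Γ : Type} [AddCommGroup Γ]

theorem outflow_contract (S : Set {v // v ≠ G.tgt e}) (φ : E → Γ) :
    (G.contract he).outflow S (fun d => φ d) = G.outflow (G.contractVertex he ⁻¹' S) φ := by
  rw [outflow_apply, outflow_apply, Fintype.sum_eq_add_sum_subtype_ne _ e]
  simp [Set.indicator_apply, Multigraph.contract, contractVertex_src_eq_contractVertex_tgt]

theorem boundary_contract {v : V} (hs : v ≠ G.src e) (ht : v ≠ G.tgt e) (φ : E → Γ) :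
    (G.contract he).boundary (fun d => φ d) ⟨v, ht⟩ = G.boundary φ v := by
  rw [boundary_apply, boundary_apply, outflow_contract]
  congr 2
  ext u
  rcases eq_or_ne u (G.tgt e) with rfl | hu
  · simp [contractVertex, hs.symm, ht.symm]
  · simp [contractVertex_of_ne G he hu]

theorem IsFlow.exists_extension_of_contract [Finite V] {φ : {d // d ≠ e} → Γ}
    (hφ : (G.contract he).IsFlow φ) : ∃ ψ : E → Γ, G.IsFlow ψ ∧ ∀ d, ψ d.1 = φ d := by
  cases nonempty_fintype V
  obtain ⟨φ₀, hφ₀⟩ : ∃ φ₀ : E → Γ, ∀ d : {d // d ≠ e}, φ₀ d = φ d :=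
    ⟨fun d => if hd : d ≠ e then φ ⟨d, hd⟩ else 0, fun d => dif_pos d.2⟩
  obtain ⟨ψ, hψ, htgt⟩ : ∃ ψ : E → Γ, (∀ d, ψ d.1 = φ d) ∧ G.boundary ψ (G.tgt e) = 0 := by
    refine ⟨φ₀ + Pi.single e (G.boundary φ₀ (G.tgt e)), fun d => ?_, ?_⟩
    · simp [d.2, hφ₀]
    · simp [boundary_single, he.symm]
  refine ⟨ψ, (G.isFlow_iff_boundary_eq_zero ψ).2 ?_, hψ⟩
  refine eq_zero_of_sum_eq_zero (G.sum_boundary ψ) (r := G.src e) fun v hs => ?_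
  rcases eq_or_ne v (G.tgt e) with rfl | ht
  · exact htgt
  · rw [← boundary_contract he hs ht, funext hψ, (isFlow_iff_boundary_eq_zero _ φ).1 hφ]
    rfl

theorem card_nowhereZeroFlow_contract_le [Finite V] [Finite Γ] {S : Set V} {f : E} (hef : e ≠ f)
    (hS : G.cutEdges S = {e, f}) :
    Nat.card ((G.contract he).NowhereZeroFlow Γ) ≤ Nat.card (G.NowhereZeroFlow Γ) := by
  have hext (φ : (G.contract he).NowhereZeroFlow Γ) :
      ∃ ψ : G.NowhereZeroFlow Γ, ∀ d, ψ.1 d.1 = φ.1 d := by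
    obtain ⟨ψ, hψ, hψφ⟩ := IsFlow.exists_extension_of_contract he φ.2.1
    have hψ0 (d : E) (hd : d ≠ e) : ψ d ≠ 0 := hψφ ⟨d, hd⟩ ▸ φ.2.2 _
    have hψe : ψ e ≠ 0 := fun hψe =>
      G.outflow_ne_zero_of_mem_cutEdges (hψ0 f hef.symm) (hS.symm.subset (by simp)) (by
        rw [hS]
        rintro d (rfl | rfl) hd
        exacts [hψe, absurd rfl hd]) (hψ.outflow_eq_zero S)
    exact ⟨⟨ψ, hψ, fun d => (eq_or_ne d e).elim (fun hd => hd ▸ hψe) (hψ0 d)⟩, hψφ⟩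
  choose ext hext using hext
  refine Nat.card_le_card_of_injective ext fun φ φ' h => Subtype.ext (funext fun d => ?_)
  rw [← hext φ d, h, hext φ' d]

end Contraction

section TwoEdgeConnected

variable {V E : Type} {G : Multigraph V E}

theorem src_ne_tgt_of_mem_cutEdges {S : Set V} {e : E} (he : e ∈ G.cutEdges S) :
    G.src e ≠ G.tgt e := by
  intro h
  rcases he with ⟨hs, ht⟩ | ⟨hs, ht⟩
  · exact ht (h ▸ hs)
  · exact hs (h ▸ ht)

theorem EdgeConnected.exists_cutEdges_eq_pair [Finite E] (hG : G.EdgeConnected 2)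
    (hG' : ¬ G.EdgeConnected 3) : ∃ S e f, e ≠ f ∧ G.cutEdges S = {e, f} := by
  have : Nonempty V := (hG ∅ (by simp)).1
  obtain ⟨S, hS, hSV, hlt⟩ := exists_ncard_cutEdges_lt_of_not_edgeConnected hG'
  have hge := hG.le_ncard_cutEdges hS hSV
  exact ⟨S, Set.ncard_eq_two.1 (by omega)⟩

end TwoEdgeConnected

end Multigraph

open Multigraph in
theorem many_nowhere_zero_Z2xZ3_flows_general {V E A B : Type} [Fintype V] [Fintype E]
    [AddCommGroup A] [AddCommGroup B] (hA : 2 ≤ Nat.card A) (hB : 3 ≤ Nat.card B)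
    (G : Multigraph V E) (hG : G.EdgeConnected 2) :
    (Nat.card A : ℝ) ^ ((1 - 2 / Nat.card B : ℝ) * (Fintype.card E - Fintype.card V + 1)) ≤
      Nat.card {φ : E → A × B // G.IsFlow φ ∧ ∀ e, φ e ≠ 0} := by
  have : Finite A := Nat.finite_of_card_ne_zero (by omega)
  have : Finite B := Nat.finite_of_card_ne_zero (by omega)
  induction hm : Fintype.card E using Nat.strong_induction_on generalizing V E with
  | h m ih =>
    by_cases hG' : G.EdgeConnected 3
    · exact hm ▸ hG'.rpow_le_card_nowhereZeroFlow hA hB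
    obtain ⟨S, e, f, hef, hS⟩ := hG.exists_cutEdges_eq_pair hG'
    have he : G.src e ≠ G.tgt e := src_ne_tgt_of_mem_cutEdges (hS.symm.subset (by simp))
    have hE := card_subtype_ne_add_one e
    have hV := card_subtype_ne_add_one (G.tgt e)
    rw [Nat.card_eq_fintype_card] at hE hV
    have hcontract := ih _ (by omega) (G.contract he) (hG.contract he) rfl
    have hflows := card_nowhereZeroFlow_contract_le (Γ := A × B) he hef hS
    rw [← hm, ← hE, ← hV, Nat.cast_add_one, Nat.cast_add_one, add_sub_add_right_eq_sub]
    exact hcontract.trans (by exact_mod_cast hflows)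

/-- Every oriented 2-edge-connected graph with `n` vertices and `m` edges has at least
`2^((m-n)/3)` nowhere-zero `ℤ₂ × ℤ₃`-flows. -/
theorem many_nowhere_zero_Z2xZ3_flows {V E : Type} [Fintype V] [Fintype E]
    (G : Multigraph V E) (hG : G.EdgeConnected 2) :
    (2 : ℝ) ^ (((Fintype.card E : ℝ) - (Fintype.card V : ℝ)) / 3) ≤
      Nat.card {φ : E → ZMod 2 × ZMod 3 // G.IsFlow φ ∧ ∀ e : E, φ e ≠ 0} := by
  refine le_trans ?_ (many_nowhere_zero_Z2xZ3_flows_general (by simp) (by simp) G hG)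
  rw [Nat.card_zmod, Nat.card_zmod]
  push_cast
  exact Real.rpow_le_rpow_of_exponent_le one_le_two (by linarith)
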